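/- arXiv:1812.09640 — 4 statements merged into one kernel-verified Lean document; each statement's English description precedes it below -/
import Mathlib

section
/- Suppose the choice function is Bayes-optimal for a utility u : X×A → ℝ, i.e., for every signal s with p(s) > 0 and every action a, η(a|s) > 0 implies ∑_x p(x|s)·u(x,a) ≥ ∑_x p(x|s)·u(x,b) for all b ∈ A. Then the revealed posteriors satisfy the no-improving-action-switches (NIAS) inequalities: for every action a with π̄(a) > 0 and every b ∈ A, ∑_{x∈X} p(x|a)·(u(x,a) − u(x,b)) ≥ 0. -/
open Finset

/-- The induced signal probability `p(s) = ∑_x μ(x) α(s|x)`. -/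
noncomputable def sigProb {X S : Type*} [Fintype X]
    (μ : X → ℝ) (α : X → S → ℝ) (s : S) : ℝ :=
  ∑ x, μ x * α x s

/-- The Bayesian posterior `p(x|s) = μ(x) α(s|x) / p(s)`. -/
noncomputable def post {X S : Type*} [Fintype X]
    (μ : X → ℝ) (α : X → S → ℝ) (s : S) (x : X) : ℝ :=
  μ x * α x s / sigProb μ α s

/-- The induced action-selection policy `π(a|x) = ∑_s α(s|x) η(a|s)`. -/
noncomputable def policy {X S A : Type*} [Fintype S]
    (α : X → S → ℝ) (η : S → A → ℝ) (x : X) (a : A) : ℝ :=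
  ∑ s, α x s * η s a

/-- The induced action probability `π̄(a) = ∑_x μ(x) π(a|x)`. -/
noncomputable def actProb {X S A : Type*} [Fintype X] [Fintype S]
    (μ : X → ℝ) (α : X → S → ℝ) (η : S → A → ℝ) (a : A) : ℝ :=
  ∑ x, μ x * policy α η x a

/-- The revealed posterior `p(x|a) = μ(x) π(a|x) / π̄(a)`. -/
noncomputable def revPost {X S A : Type*} [Fintype X] [Fintype S]
    (μ : X → ℝ) (α : X → S → ℝ) (η : S → A → ℝ) (a : A) (x : X) : ℝ :=
  μ x * policy α η x a / actProb μ α η a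

/-!
Given an action `a`, the revealed posterior is the average of the Bayesian posteriors over the
signals that may have led to `a`, with weights `p(s|a) = p(s) η(a|s) / π̄(a)`. At every signal of
positive weight, `a` does at least as well as `b` by optimality, hence also on average.
-/

/-- The probability `p(s|a) = p(s) η(a|s) / π̄(a)` that the signal was `s`, given that the action
`a` was chosen; it is `0` by convention when `π̄(a) = 0`. -/
noncomputable def sigProbGivenAct {X S A : Type*} [Fintype X] [Fintype S]
    (μ : X → ℝ) (α : X → S → ℝ) (η : S → A → ℝ) (a : A) (s : S) : ℝ :=
  sigProb μ α s * η s a / actProb μ α η a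

section

variable {X S A : Type*} {μ : X → ℝ} {α : X → S → ℝ} {η : S → A → ℝ} {a : A}

theorem sigProb_nonneg [Fintype X] {s : S} (hμ : ∀ x, 0 ≤ μ x) (hα : ∀ x, 0 ≤ α x s) :
    0 ≤ sigProb μ α s :=
  sum_nonneg fun x _ => mul_nonneg (hμ x) (hα x)

theorem policy_nonneg [Fintype S] {x : X} (hα : ∀ s, 0 ≤ α x s) (hη : ∀ s, 0 ≤ η s a) :
    0 ≤ policy α η x a :=
  sum_nonneg fun s _ => mul_nonneg (hα s) (hη s)

theorem sigProb_mul_post [Fintype X] {s : S} (hμ : ∀ x, 0 ≤ μ x) (hα : ∀ x, 0 ≤ α x s) (x : X) :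
    sigProb μ α s * post μ α s x = μ x * α x s := by
  refine mul_div_cancel_of_imp' fun hp => ?_
  have hzero : ∀ y ∈ univ, μ y * α y s = 0 :=
    (sum_eq_zero_iff_of_nonneg fun y _ => mul_nonneg (hμ y) (hα y)).1 hp
  exact hzero x (mem_univ x)

variable [Fintype X] [Fintype S]

theorem actProb_nonneg (hμ : ∀ x, 0 ≤ μ x) (hα : ∀ x s, 0 ≤ α x s) (hη : ∀ s, 0 ≤ η s a) :
    0 ≤ actProb μ α η a :=
  sum_nonneg fun x _ => mul_nonneg (hμ x) (policy_nonneg (hα x) hη)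

theorem sigProbGivenAct_nonneg (hμ : ∀ x, 0 ≤ μ x) (hα : ∀ x s, 0 ≤ α x s)
    (hη : ∀ s, 0 ≤ η s a) (s : S) : 0 ≤ sigProbGivenAct μ α η a s :=
  div_nonneg (mul_nonneg (sigProb_nonneg hμ fun x => hα x s) (hη s)) (actProb_nonneg hμ hα hη)

theorem sigProbGivenAct_pos_iff {s : S} (hμ : ∀ x, 0 ≤ μ x) (hα : ∀ x, 0 ≤ α x s)
    (ha : 0 < actProb μ α η a) :
    0 < sigProbGivenAct μ α η a s ↔ 0 < sigProb μ α s ∧ 0 < η s a := by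
  rw [sigProbGivenAct, div_pos_iff_of_pos_right ha, mul_pos_iff,
    or_iff_left fun h => (sigProb_nonneg hμ hα).not_gt h.1]

theorem revPost_eq_sum_sigProbGivenAct_mul_post (hμ : ∀ x, 0 ≤ μ x) (hα : ∀ x s, 0 ≤ α x s)
    (x : X) :
    revPost μ α η a x = ∑ s, sigProbGivenAct μ α η a s * post μ α s x := by
  rw [revPost, policy, mul_sum, sum_div]
  refine sum_congr rfl fun s _ => ?_
  calc μ x * (α x s * η s a) / actProb μ α η a
      = μ x * α x s * η s a / actProb μ α η a := by rw [mul_assoc]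
    _ = sigProb μ α s * post μ α s x * η s a / actProb μ α η a := by
      rw [sigProb_mul_post hμ fun y => hα y s]
    _ = sigProbGivenAct μ α η a s * post μ α s x := by rw [sigProbGivenAct]; ring

theorem sum_revPost_mul (hμ : ∀ x, 0 ≤ μ x) (hα : ∀ x s, 0 ≤ α x s) (f : X → ℝ) :
    ∑ x, revPost μ α η a x * f x =
      ∑ s, sigProbGivenAct μ α η a s * ∑ x, post μ α s x * f x := by
  simp only [revPost_eq_sum_sigProbGivenAct_mul_post hμ hα, sum_mul, mul_sum, mul_assoc]
  exact sum_comm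

theorem nias_of_bayes_optimal_choice_general {b : A} (hμ : ∀ x, 0 ≤ μ x)
    (hα : ∀ x s, 0 ≤ α x s) (hη : ∀ s, 0 ≤ η s a) (u : X → A → ℝ)
    (hopt : ∀ s, 0 < sigProb μ α s → 0 < η s a →
      ∑ x, post μ α s x * u x b ≤ ∑ x, post μ α s x * u x a)
    (ha : 0 < actProb μ α η a) :
    0 ≤ ∑ x, revPost μ α η a x * (u x a - u x b) := by
  rw [sum_revPost_mul hμ hα]
  refine sum_nonneg fun s _ => ?_
  obtain hzero | hpos := (sigProbGivenAct_nonneg hμ hα hη s).eq_or_lt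
  · rw [← hzero, zero_mul]
  · obtain ⟨hp, hηs⟩ := (sigProbGivenAct_pos_iff hμ (fun x => hα x s) ha).1 hpos
    have hgain : 0 ≤ ∑ x, post μ α s x * (u x a - u x b) := by
      simpa only [mul_sub, sum_sub_distrib, sub_nonneg] using hopt s hp hηs
    exact mul_nonneg hpos.le hgain

end

/-- If the choice function is Bayes-optimal for the utility `u`, then the revealed
posteriors satisfy the NIAS (no-improving-action-switches) inequalities. -/
theorem nias_of_bayes_optimal_choice
    {X S A : Type*} [Fintype X] [Fintype S] [Fintype A]
    (μ : X → ℝ) (hμpos : ∀ x, 0 < μ x) (hμsum : ∑ x, μ x = 1)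
    (α : X → S → ℝ) (hαnn : ∀ x s, 0 ≤ α x s) (hαsum : ∀ x, ∑ s, α x s = 1)
    (η : S → A → ℝ) (hηnn : ∀ s a, 0 ≤ η s a) (hηsum : ∀ s, ∑ a, η s a = 1)
    (u : X → A → ℝ)
    (hopt : ∀ s, 0 < sigProb μ α s → ∀ a, 0 < η s a →
      ∀ b, ∑ x, post μ α s x * u x b ≤ ∑ x, post μ α s x * u x a) :
    ∀ a, 0 < actProb μ α η a →
      ∀ b, 0 ≤ ∑ x, revPost μ α η a x * (u x a - u x b) :=
  fun a ha b => nias_of_bayes_optimal_choice_general (fun x => (hμpos x).le) hαnn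
    (fun s => hηnn s a) u (fun s hp hηs => hopt s hp a hηs b) ha
end

section
/- Let K ≥ 1 and G : {1,…,K} × {1,…,K} → ℝ satisfy the no-improving-attention-cycles (NIAC) condition: for every m ≥ 2 and every sequence of distinct indices k_1,…,k_m in {1,…,K} (with k_{m+1} = k_1), ∑_{i=1}^{m} ( G(k_i,k_i) − G(k_{i+1},k_i) ) ≥ 0. Then there exists a nonnegative cost function C : {1,…,K} → ℝ, C(k) ≥ 0 for all k, rationalizing the attention choices: G(k,k) − C(k) ≥ G(w,k) − C(w) for all k, w ∈ {1,…,K}. -/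
open Finset

/-!
Weight the step from `k` to `w` by the loss `G k k - G w k`. NIAC says that simple cycles have
nonnegative weight; cutting a closed walk at a repeated vertex extends this to all closed walks.
As in Rockafellar's theorem on cyclic monotonicity, the infimal weight of a walk to a fixed base
point is then a potential: it is finite because every walk to the base point closes up, and
prefixing a walk by one more step gives the rationalizing inequality.
-/

/-- Total weight of the steps of the walk that starts at `x` and then visits the entries of a list
in order. The starting point is kept apart from the list so that walks are never empty; the closed
walks at `x` are those along `l ++ [x]`. -/
def walkCost {α M : Type*} [AddCommMonoid M] (a : α → α → M) : α → List α → M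
  | _, [] => 0
  | x, y :: l => a x y + walkCost a y l

section WalkCost

variable {α M : Type*} [AddCommMonoid M] (a : α → α → M)

lemma walkCost_append_cons (x y : α) (l₁ l₂ : List α) :
    walkCost a x (l₁ ++ y :: l₂) = walkCost a x (l₁ ++ [y]) + walkCost a y l₂ := by
  induction l₁ generalizing x with
  | nil => simp [walkCost]
  | cons z l₁ ih => simp only [List.cons_append, walkCost, ih z, add_assoc]

lemma walkCost_append_singleton (x y : α) (l : List α) :
    walkCost a x (l ++ [y]) =
      ∑ i : Fin l.length, a ((x :: l).get i.castSucc) ((x :: l).get i.succ) +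
        a ((x :: l).get (Fin.last l.length)) y := by
  induction l generalizing x with
  | nil => simp [walkCost]
  | cons z l ih => simp [walkCost, ih z, Fin.sum_univ_succ, add_assoc]

lemma walkCost_closed_eq_sum (x : α) (l : List α) :
    walkCost a x (l ++ [x]) =
      ∑ i : Fin (l.length + 1), a ((x :: l).get i) ((x :: l).get (i + 1)) := by
  rw [walkCost_append_singleton, Fin.sum_univ_castSucc]
  simp only [Fin.coeSucc_eq_succ, Fin.last_add_one]
  rfl

end WalkCost

lemma exists_eq_append_cons_append_cons_of_not_nodup {α : Type*} {l : List α} (hl : ¬ l.Nodup) :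
    ∃ (y : α) (s t r : List α), l = s ++ y :: (t ++ y :: r) := by
  obtain ⟨y, hy⟩ : ∃ y, [y, y].Sublist l := by simpa [List.nodup_iff_sublist] using hl
  obtain ⟨l₁, l₂, rfl, hy₁, hy₂⟩ := List.cons_sublist_iff.1 hy
  obtain ⟨s, t₁, rfl⟩ := List.append_of_mem hy₁
  obtain ⟨t₂, r, rfl⟩ := List.append_of_mem (List.singleton_sublist.1 hy₂)
  exact ⟨y, s, t₁ ++ t₂, r, by simp⟩

theorem walkCost_closed_nonneg {α M : Type*} [AddCommMonoid M] [Preorder M] [AddLeftMono M]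
    {a : α → α → M} (h : ∀ x l, (x :: l).Nodup → 0 ≤ walkCost a x (l ++ [x]))
    (x : α) (l : List α) : 0 ≤ walkCost a x (l ++ [x]) := by
  by_cases hx : x ∈ l
  · obtain ⟨s, t, rfl⟩ := List.append_of_mem hx
    rw [List.append_assoc, List.cons_append, walkCost_append_cons]
    exact add_nonneg (walkCost_closed_nonneg h x s) (walkCost_closed_nonneg h x t)
  by_cases hl : l.Nodup
  · exact h x l (hl.cons hx)
  obtain ⟨y, s, t, r, rfl⟩ := exists_eq_append_cons_append_cons_of_not_nodup hl
  calc
    0 ≤ walkCost a y (t ++ [y]) + walkCost a x ((s ++ y :: r) ++ [x]) :=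
      add_nonneg (walkCost_closed_nonneg h y t) (walkCost_closed_nonneg h x (s ++ y :: r))
    _ = walkCost a x ((s ++ y :: (t ++ y :: r)) ++ [x]) := by
      simp only [List.append_assoc, List.cons_append]
      rw [walkCost_append_cons a x y s (r ++ [x]), walkCost_append_cons a x y s (t ++ _),
        walkCost_append_cons a y y t (r ++ [x]), add_left_comm]
termination_by l.length
decreasing_by all_goals grind

/-- Infimal weight of a walk from `k` to `b`. It is a genuine infimum only when these weights are
bounded below, as they are when closed walks at `b` have nonnegative weight. -/
noncomputable def infWalkCost {α M : Type*} [AddCommMonoid M] [InfSet M] (a : α → α → M)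
    (k b : α) : M :=
  ⨅ l : List α, walkCost a k (l ++ [b])

section Potential

variable {α M : Type*} [AddCommGroup M] [ConditionallyCompleteLattice M] [IsOrderedAddMonoid M]
  {a : α → α → M} {b : α}

lemma neg_le_walkCost (h : ∀ l, 0 ≤ walkCost a b (l ++ [b])) (k : α) (l : List α) :
    -a b k ≤ walkCost a k (l ++ [b]) :=
  neg_le_iff_add_nonneg'.2 (h (k :: l))

lemma neg_le_infWalkCost (h : ∀ l, 0 ≤ walkCost a b (l ++ [b])) (k : α) :
    -a b k ≤ infWalkCost a k b :=
  le_ciInf (neg_le_walkCost h k)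

lemma infWalkCost_le_add (h : ∀ l, 0 ≤ walkCost a b (l ++ [b])) (k w : α) :
    infWalkCost a k b ≤ a k w + infWalkCost a w b := by
  have hbdd : BddBelow (Set.range fun l ↦ walkCost a k (l ++ [b])) :=
    ⟨-a b k, Set.forall_mem_range.2 (neg_le_walkCost h k)⟩
  exact sub_le_iff_le_add'.1 (le_ciInf fun l ↦ sub_le_iff_le_add'.2 (ciInf_le hbdd (w :: l)))

end Potential

lemma walkCost_loss_closed_nonneg_of_niac {α M : Type*} [AddCommGroup M] [PartialOrder M]
    [IsOrderedAddMonoid M] {G : α → α → M}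
    (hNIAC : ∀ m : ℕ, ∀ k : Fin (m + 2) → α, Function.Injective k →
      0 ≤ ∑ i, (G (k i) (k i) - G (k (i + 1)) (k i))) (x : α) (l : List α) :
    0 ≤ walkCost (fun k w ↦ G k k - G w k) x (l ++ [x]) := by
  refine walkCost_closed_nonneg (fun x l hl ↦ ?_) x l
  cases l with
  | nil => simp [walkCost]
  | cons y l =>
    rw [walkCost_closed_eq_sum]
    exact hNIAC l.length (x :: y :: l).get hl.injective_get

theorem rationalizing_costs_of_niac_general {α M : Type*} [AddCommGroup M]
    [ConditionallyCompleteLattice M] [IsOrderedAddMonoid M] (G : α → α → M) (b : α)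
    (hG : BddBelow (Set.range fun w ↦ G w b))
    (hNIAC : ∀ m : ℕ, ∀ k : Fin (m + 2) → α, Function.Injective k →
      0 ≤ ∑ i, (G (k i) (k i) - G (k (i + 1)) (k i))) :
    ∃ C : α → M, (∀ k, 0 ≤ C k) ∧ ∀ k w, G w k - C w ≤ G k k - C k := by
  let a : α → α → M := fun k w ↦ G k k - G w k
  have hclosed : ∀ l, 0 ≤ walkCost a b (l ++ [b]) := walkCost_loss_closed_nonneg_of_niac hNIAC b
  obtain ⟨g, hg⟩ := hG
  refine ⟨fun k ↦ infWalkCost a k b + (G b b - g), fun k ↦ ?_, fun k w ↦ ?_⟩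
  · have hbk : G k b - G b b ≤ infWalkCost a k b := by
      simpa only [a, neg_sub] using neg_le_infWalkCost hclosed k
    calc
      0 ≤ G k b - g := sub_nonneg.2 (hg ⟨k, rfl⟩)
      _ = G k b - G b b + (G b b - g) := (sub_add_sub_cancel _ _ _).symm
      _ ≤ infWalkCost a k b + (G b b - g) := add_le_add_left hbk _
  · have hkw : infWalkCost a k b ≤ G k k - G w k + infWalkCost a w b :=
      infWalkCost_le_add hclosed k w
    rw [sub_add_eq_add_sub, le_sub_iff_add_le', ← sub_le_sub_iff] at hkw
    simpa only [sub_add_eq_sub_sub] using sub_le_sub_right hkw (G b b - g)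

/-- If the no-improving-attention-cycles (NIAC) condition holds (over all cyclic
sequences of distinct indices of length at least two), then there exists a nonnegative
attention-cost function rationalizing the attention choices. -/
theorem rationalizing_costs_of_niac
    (K : ℕ) (hK : 1 ≤ K) (G : Fin K → Fin K → ℝ)
    (hNIAC : ∀ m : ℕ, ∀ k : Fin (m + 2) → Fin K, Function.Injective k →
      0 ≤ ∑ i, (G (k i) (k i) - G (k (i + 1)) (k i))) :
    ∃ C : Fin K → ℝ, (∀ k, 0 ≤ C k) ∧ ∀ k w, G w k - C w ≤ G k k - C k :=
  rationalizing_costs_of_niac_general G ⟨0, hK⟩ (Set.finite_range _).bddBelow hNIAC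
end

section
/- Let I be a finite nonempty index set and β ∈ (0,1). The order-β Rényi divergence D_β(P‖Q) = (1/(β−1))·ln( ∑_{i∈I} P_i^β Q_i^{1−β} ) is jointly convex on pairs of full-support pmfs on I: for all full-support pmfs P₀, P₁, Q₀, Q₁ on I and all t ∈ [0,1], D_β( tP₁ + (1−t)P₀ ‖ tQ₁ + (1−t)Q₀ ) ≤ t·D_β(P₁‖Q₁) + (1−t)·D_β(P₀‖Q₀). -/
open Finset

/-!
By Hölder's inequality the weighted geometric mean `(p, q) ↦ p ^ β * q ^ (1 - β)` is superadditive;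
being homogeneous of degree one, it is jointly concave. Summing over the alphabet keeps concavity,
and so does the increasing concave function `log`. The factor `1 / (β - 1)` is negative for `β < 1`
and turns concavity into convexity.
-/

theorem sum_rpow_mul_rpow_le_rpow_sum_mul_rpow_sum {ι : Type*} (s : Finset ι) {f g : ι → ℝ}
    {a b : ℝ} (ha : 0 < a) (hb : 0 < b) (hab : a + b = 1)
    (hf : ∀ i ∈ s, 0 ≤ f i) (hg : ∀ i ∈ s, 0 ≤ g i) :
    ∑ i ∈ s, f i ^ a * g i ^ b ≤ (∑ i ∈ s, f i) ^ a * (∑ i ∈ s, g i) ^ b := by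
  have rpow_rpow_sum {h : ι → ℝ} {c : ℝ} (hc : 0 < c) (hh : ∀ i ∈ s, 0 ≤ h i) :
      ∑ i ∈ s, (h i ^ c) ^ c⁻¹ = ∑ i ∈ s, h i :=
    sum_congr rfl fun i hi ↦ Real.rpow_rpow_inv (hh i hi) hc.ne'
  have holder := Real.inner_le_Lp_mul_Lq_of_nonneg s (Real.HolderConjugate.inv_inv ha hb hab)
    (fun i hi ↦ Real.rpow_nonneg (hf i hi) a) (fun i hi ↦ Real.rpow_nonneg (hg i hi) b)
  simpa only [rpow_rpow_sum ha hf, rpow_rpow_sum hb hg, one_div, inv_inv] using holder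

theorem concaveOn_rpow_mul_rpow {a b : ℝ} (ha : 0 < a) (hb : 0 < b) (hab : a + b = 1) :
    ConcaveOn ℝ (Set.Ici (0 : ℝ × ℝ)) fun x ↦ x.1 ^ a * x.2 ^ b := by
  refine ⟨convex_Ici 0, fun x hx y hy u v hu hv _ ↦ ?_⟩
  have homogeneous {c : ℝ} (hc : 0 ≤ c) {z : ℝ × ℝ} (hz : 0 ≤ z) :
      (c * z.1) ^ a * (c * z.2) ^ b = c * (z.1 ^ a * z.2 ^ b) := by
    rw [Real.mul_rpow hc hz.1, Real.mul_rpow hc hz.2, mul_mul_mul_comm,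
      ← Real.rpow_add_of_nonneg hc ha.le hb.le, hab, Real.rpow_one]
  have superadditive := sum_rpow_mul_rpow_le_rpow_sum_mul_rpow_sum univ
    (f := ![u * x.1, v * y.1]) (g := ![u * x.2, v * y.2]) ha hb hab
    (by simp [Fin.forall_fin_two, mul_nonneg hu hx.1, mul_nonneg hv hy.1])
    (by simp [Fin.forall_fin_two, mul_nonneg hu hx.2, mul_nonneg hv hy.2])
  simpa [Fin.sum_univ_two, homogeneous hu hx, homogeneous hv hy] using superadditive

theorem concaveOn_log_comp {E : Type*} [AddCommMonoid E] [SMul ℝ E] {s : Set E} {f : E → ℝ}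
    (hf : ConcaveOn ℝ s f) (hpos : ∀ x ∈ s, 0 < f x) :
    ConcaveOn ℝ s fun x ↦ Real.log (f x) := by
  refine ⟨hf.1, fun x hx y hy u v hu hv huv ↦ ?_⟩
  calc u • Real.log (f x) + v • Real.log (f y)
      ≤ Real.log (u • f x + v • f y) :=
        strictConcaveOn_log_Ioi.concaveOn.2 (hpos x hx) (hpos y hy) hu hv huv
    _ ≤ Real.log (f (u • x + v • y)) :=
        Real.log_le_log (convex_Ioi (0 : ℝ) (hpos x hx) (hpos y hy) hu hv huv)
          (hf.2 hx hy hu hv huv)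

section Renyi

variable {I : Type*} [Fintype I] {β : ℝ}

/-- The Chernoff coefficient of order `β` of two weight vectors, whose logarithm gives the Rényi
divergence. The weights are not required to sum to `1`. -/
noncomputable def chernoffCoeff (β : ℝ) (P Q : I → ℝ) : ℝ :=
  ∑ i, P i ^ β * Q i ^ (1 - β)

/-- The Rényi divergence of order `β`, given on unnormalised weight vectors by the formula for pmfs.
For `β < 1` its value on mutually singular weights is the junk `0` instead of `∞`. -/
noncomputable def renyiDiv (β : ℝ) (P Q : I → ℝ) : ℝ :=
  1 / (β - 1) * Real.log (chernoffCoeff β P Q)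

variable (I β) in
/-- The pairs of nonnegative weight vectors on `I` with positive Chernoff coefficient. For
`β ∈ (0, 1)` they are the pairs that are not mutually singular, those of finite Rényi divergence. -/
def renyiDomain : Set ((I → ℝ) × (I → ℝ)) :=
  {w | 0 ≤ w ∧ 0 < chernoffCoeff β w.1 w.2}

theorem mk_mem_renyiDomain [Nonempty I] {P Q : I → ℝ} (hP : ∀ i, 0 < P i) (hQ : ∀ i, 0 < Q i) :
    (P, Q) ∈ renyiDomain I β :=
  ⟨⟨fun i ↦ (hP i).le, fun i ↦ (hQ i).le⟩, sum_pos
    (fun i _ ↦ mul_pos (Real.rpow_pos_of_pos (hP i) _) (Real.rpow_pos_of_pos (hQ i) _))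
    univ_nonempty⟩

theorem concaveOn_chernoffCoeff (hβ : β ∈ Set.Ioo (0 : ℝ) 1) :
    ConcaveOn ℝ (Set.Ici (0 : (I → ℝ) × (I → ℝ))) fun w ↦ chernoffCoeff β w.1 w.2 := by
  refine ⟨convex_Ici 0, fun x hx y hy u v hu hv huv ↦ ?_⟩
  simp only [chernoffCoeff, smul_sum, ← sum_add_distrib]
  exact sum_le_sum fun i _ ↦
    (concaveOn_rpow_mul_rpow hβ.1 (sub_pos.2 hβ.2) (add_sub_cancel β 1)).2
      (x := (x.1 i, x.2 i)) (y := (y.1 i, y.2 i))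
      ⟨hx.1 i, hx.2 i⟩ ⟨hy.1 i, hy.2 i⟩ hu hv huv

theorem renyi_divergence_jointly_convex_general (hβ : β ∈ Set.Ioo (0 : ℝ) 1) :
    ConvexOn ℝ (renyiDomain I β) fun w ↦ renyiDiv β w.1 w.2 := by
  have coeff_concave := concaveOn_chernoffCoeff (I := I) hβ
  have log_concave : ConcaveOn ℝ (renyiDomain I β) fun w ↦ Real.log (chernoffCoeff β w.1 w.2) :=
    concaveOn_log_comp (coeff_concave.subset (fun _ hw ↦ hw.1) (coeff_concave.convex_gt 0))
      fun _ hw ↦ hw.2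
  have neg_factor : 1 / (β - 1) = -(1 / (1 - β)) := by rw [← neg_sub, one_div_neg_eq_neg_one_div]
  simpa only [renyiDiv, neg_factor, neg_mul] using!
    (log_concave.smul (one_div_nonneg.2 (sub_nonneg.2 hβ.2.le))).neg

end Renyi

/-- For `β ∈ (0,1)`, the order-`β` Rényi divergence is jointly convex on pairs of
full-support pmfs on a finite set. -/
theorem renyi_divergence_jointly_convex
    {I : Type*} [Fintype I] [Nonempty I]
    (β : ℝ) (hβ : β ∈ Set.Ioo (0:ℝ) 1)
    (P₀ P₁ Q₀ Q₁ : I → ℝ)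
    (hP₀pos : ∀ i, 0 < P₀ i) (hP₀sum : ∑ i, P₀ i = 1)
    (hP₁pos : ∀ i, 0 < P₁ i) (hP₁sum : ∑ i, P₁ i = 1)
    (hQ₀pos : ∀ i, 0 < Q₀ i) (hQ₀sum : ∑ i, Q₀ i = 1)
    (hQ₁pos : ∀ i, 0 < Q₁ i) (hQ₁sum : ∑ i, Q₁ i = 1)
    (t : ℝ) (ht : t ∈ Set.Icc (0:ℝ) 1) :
    (1/(β-1)) * Real.log
        (∑ i, (t * P₁ i + (1-t) * P₀ i) ^ β * (t * Q₁ i + (1-t) * Q₀ i) ^ (1-β))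
      ≤ t * ((1/(β-1)) * Real.log (∑ i, (P₁ i) ^ β * (Q₁ i) ^ (1-β)))
        + (1-t) * ((1/(β-1)) * Real.log (∑ i, (P₀ i) ^ β * (Q₀ i) ^ (1-β))) :=
  (renyi_divergence_jointly_convex_general hβ).2 (mk_mem_renyiDomain hP₁pos hQ₁pos)
    (mk_mem_renyiDomain hP₀pos hQ₀pos) ht.1 (sub_nonneg.2 ht.2) (add_sub_cancel t 1)
end

section
/- (Empirical Bernstein inequality, the concentration ingredient of the paper's finite-sample bound.) Let Z₁, …, Z_n with n ≥ 2 be i.i.d. random variables taking values in [0,1], let Z̄ = (1/n)·∑_{i=1}^n Z_i be the sample mean and V_n = (1/(n(n−1)))·∑_{1 ≤ i < j ≤ n} (Z_i − Z_j)² the (unbiased) sample variance. Then for every γ ∈ (0,1), with probability at least 1 − γ, E[Z₁] ≤ Z̄ + √( 2·V_n·ln(2/γ) / n ) + 7·ln(2/γ) / (3·(n−1)). -/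
open Finset MeasureTheory ProbabilityTheory
open scoped Classical

/-!
Let `v` be the variance and `L = log (2 / γ)`. Bernstein's inequality bounds the mean by
`Z̄ + √(2 v L / n) + L / (3 n)` outside an event of probability `γ / 2`, so it remains to bound `√v`
by the sample variance. `Vₙ` is a U-statistic, that is, an average over permutations of means of
`⌊n / 2⌋` terms `(Zᵢ - Zⱼ) ^ 2 / 2` taken over disjoint, hence independent, pairs. By Jensen its
moment generating function is at most that of a single such mean (Hoeffding), and since the terms
lie in `[0, 1 / 2]` and have mean `v`, outside a second event of probability `γ / 2` one has
`v - Vₙ ≤ √(2 v L / (n - 1))`. Solving this quadratic inequality for `√v` gives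
`√v ≤ √Vₙ + √(2 L / (n - 1))`, and the constant is `7 / 3 = 2 + 1 / 3`.
-/

section RealInequalities

lemma exp_le_one_add_add_sq_div_two_of_nonpos {y : ℝ} (hy : y ≤ 0) :
    Real.exp y ≤ 1 + y + y ^ 2 / 2 := by
  have hexp : 1 - y + y ^ 2 / 2 ≤ Real.exp (-y) := by
    simpa [sub_eq_add_neg] using Real.quadratic_le_exp_of_nonneg (neg_nonneg.2 hy)
  have hpos : 0 < 1 - y + y ^ 2 / 2 := by nlinarith [sq_nonneg y]
  -- `(1 - y + y² / 2) (1 + y + y² / 2) = 1 + y⁴ / 4`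
  calc Real.exp y = 1 / Real.exp (-y) := by rw [Real.exp_neg, one_div, inv_inv]
    _ ≤ 1 / (1 - y + y ^ 2 / 2) := by gcongr
    _ ≤ 1 + y + y ^ 2 / 2 := by
      rw [div_le_iff₀ hpos]
      nlinarith [sq_nonneg (y ^ 2)]

lemma exp_le_one_add_add_sq_div_of_nonneg {y : ℝ} (hy : 0 ≤ y) (hy3 : y < 3) :
    Real.exp y ≤ 1 + y + y ^ 2 / (2 * (1 - y / 3)) := by
  have hexp : HasSum (fun k : ℕ ↦ y ^ (k + 2) / (k + 2).factorial) (Real.exp y - (1 + y)) := by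
    have h := NormedSpace.expSeries_div_hasSum_exp y
    rw [← Real.exp_eq_exp_ℝ] at h
    simpa [Finset.sum_range_succ] using (hasSum_nat_add_iff' 2).2 h
  have hgeom : HasSum (fun k : ℕ ↦ y ^ 2 / 2 * (y / 3) ^ k) (y ^ 2 / 2 * (1 - y / 3)⁻¹) :=
    (hasSum_geometric_of_lt_one (by positivity) (by linarith)).mul_left _
  have hterm (k : ℕ) : y ^ (k + 2) / (k + 2).factorial ≤ y ^ 2 / 2 * (y / 3) ^ k := by
    have hfact : (2 * 3 ^ k : ℝ) ≤ (k + 2).factorial := by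
      rw [add_comm k]
      exact_mod_cast Nat.factorial_mul_pow_le_factorial (m := 2) (n := k)
    calc y ^ (k + 2) / (k + 2).factorial ≤ y ^ (k + 2) / (2 * 3 ^ k) := by gcongr
      _ = y ^ 2 / 2 * (y / 3) ^ k := by rw [pow_add, div_pow]; field_simp
  have hle := hasSum_le hterm hexp hgeom
  have hsplit : y ^ 2 / 2 * (1 - y / 3)⁻¹ = y ^ 2 / (2 * (1 - y / 3)) := by
    rw [← div_eq_mul_inv, div_div]
  linarith

lemma exp_le_one_add_add_sq_div_of_le {y b : ℝ} (hb : 0 ≤ b) (hb3 : b < 3) (hyb : y ≤ b) :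
    Real.exp y ≤ 1 + y + y ^ 2 / (2 * (1 - b / 3)) := by
  have hb' : 0 < 1 - b / 3 := by linarith
  rcases le_total 0 y with hy | hy
  · calc Real.exp y ≤ 1 + y + y ^ 2 / (2 * (1 - y / 3)) :=
          exp_le_one_add_add_sq_div_of_nonneg hy (hyb.trans_lt hb3)
      _ ≤ 1 + y + y ^ 2 / (2 * (1 - b / 3)) := by gcongr
  · calc Real.exp y ≤ 1 + y + y ^ 2 / 2 := exp_le_one_add_add_sq_div_two_of_nonpos hy
      _ ≤ 1 + y + y ^ 2 / (2 * (1 - b / 3)) := by gcongr; linarith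

lemma sqrt_le_sqrt_add_of_sub_le {v w c : ℝ} (hv : 0 ≤ v) (hc : 0 ≤ c)
    (h : v - w ≤ c * √v) : √v ≤ √w + c := by
  by_contra! hlt
  have hw : w ≤ √w ^ 2 := by
    rcases le_total 0 w with h0 | h0
    · rw [Real.sq_sqrt h0]
    · exact h0.trans (sq_nonneg _)
  nlinarith [Real.sq_sqrt hv, Real.sqrt_nonneg w, Real.sqrt_nonneg v]

lemma sqrt_sq_half_mul_le_mul_sqrt {R v L k N : ℝ} (hR : 0 ≤ R) (hv : 0 ≤ v) (hL : 0 ≤ L)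
    (hN : 0 < N) (hNk : N ≤ 2 * k) :
    √(2 * (R ^ 2 / 2 * v) * (L / k)) ≤ R * √(2 * v * L / N) := by
  have hk : 0 < k := by linarith
  calc √(2 * (R ^ 2 / 2 * v) * (L / k)) = √(R ^ 2 * (2 * v * L / (2 * k))) := by
        congr 1; field_simp
    _ ≤ √(R ^ 2 * (2 * v * L / N)) := by gcongr
    _ = R * √(2 * v * L / N) := by rw [Real.sqrt_mul (sq_nonneg R), Real.sqrt_sq hR]

lemma le_add_sqrt_add_of_bernstein {m s v w L R N : ℝ} (hv : 0 ≤ v) (hL : 0 ≤ L) (hR : 0 ≤ R)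
    (hN : 1 < N) (hmean : m - s ≤ √(2 * v * L / N) + R * L / (3 * N))
    (hvar : v - w ≤ R * √(2 * v * L / (N - 1))) :
    m ≤ s + √(2 * w * L / N) + 7 * R * L / (3 * (N - 1)) := by
  have hN1 : 0 < N - 1 := by linarith
  have hN0 : 0 < N := by linarith
  set p := √(2 * L / (N - 1)) with hp
  set q := √(2 * L / N) with hq
  have hqp : q ≤ p := Real.sqrt_le_sqrt (by gcongr; linarith)
  have hpp : p * p = 2 * L / (N - 1) := Real.mul_self_sqrt (by positivity)
  have hsqrt_div (a M : ℝ) (hM : 0 < M) : √(2 * a * L / M) = √(2 * L / M) * √a := by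
    rw [← Real.sqrt_mul (by positivity)]
    ring_nf
  have hsd : √v ≤ √w + R * p := by
    refine sqrt_le_sqrt_add_of_sub_le hv (by positivity) ?_
    rwa [hsqrt_div v _ hN1, ← mul_assoc] at hvar
  calc m ≤ s + (q * √v + R * L / (3 * N)) := by rw [hq, ← hsqrt_div v _ hN0]; linarith
    _ ≤ s + (q * (√w + R * p) + R * L / (3 * (N - 1))) := by gcongr; linarith
    _ ≤ s + (q * √w + p * (R * p) + R * L / (3 * (N - 1))) := by rw [mul_add]; gcongr
    _ = s + √(2 * w * L / N) + R * (p * p) + R * L / (3 * (N - 1)) := by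
      rw [hsqrt_div w _ hN0]; ring
    _ = s + √(2 * w * L / N) + 7 * R * L / (3 * (N - 1)) := by rw [hpp]; field_simp; ring

lemma exists_gaussian_exponent_le_neg {w r s : ℝ} (hr : 0 ≤ r) (hs : √(2 * w * r) < s) :
    ∃ t ≤ 0, t * s + t ^ 2 * w / 2 ≤ -r := by
  have hs_pos : 0 < s := (Real.sqrt_nonneg _).trans_lt hs
  have hs_sq : 2 * w * r ≤ s ^ 2 := (Real.sqrt_le_left hs_pos.le).1 hs.le
  -- At `s ^ 2 = 2 w r` this is the minimizer `-s / w`, but it needs no division by `w`.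
  refine ⟨-(2 * r / s), neg_nonpos.2 (by positivity), ?_⟩
  calc -(2 * r / s) * s + (-(2 * r / s)) ^ 2 * w / 2
      = -2 * r + r * (2 * w * r) / s ^ 2 := by field_simp
    _ ≤ -2 * r + r * s ^ 2 / s ^ 2 := by gcongr
    _ = -r := by field_simp; ring

lemma exists_bernstein_exponent_le_neg {v L b u : ℝ} (hb : 0 ≤ b) (hL : 0 < L)
    (hu : √(2 * v * L) < u) :
    ∃ t, 0 ≤ t ∧ t * b < 3 ∧
      -t * (u + b * L / 3) + t ^ 2 * v / (2 * (1 - t * b / 3)) ≤ -L := by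
  have hu_pos : 0 < u := (Real.sqrt_nonneg _).trans_lt hu
  have hu_sq : 2 * v * L ≤ u ^ 2 := (Real.sqrt_le_left hu_pos.le).1 hu.le
  -- `t = 1 / (x + b / 3)` turns `1 - t b / 3` into `t x`, and the remaining trade-off
  -- `L x + v / (2 x)` is minimized by this `x` when `u ^ 2 = 2 v L`.
  set x := u / (2 * L) with hx
  have hx_pos : 0 < x := by positivity
  have hvx : v / (2 * x) ≤ u / 2 := by
    rw [hx, div_le_iff₀ (by positivity)]
    field_simp
    linarith
  set t := 1 / (x + b / 3)
  have ht_pos : 0 < t := by positivity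
  have ht_inv : t * (x + b / 3) = 1 := one_div_mul_cancel (by positivity)
  refine ⟨t, ht_pos.le, by nlinarith [mul_pos ht_pos hx_pos], ?_⟩
  calc -t * (u + b * L / 3) + t ^ 2 * v / (2 * (1 - t * b / 3))
      = t * (v / (2 * x) - u - b * L / 3) := by
        rw [show 1 - t * b / 3 = t * x by linarith]
        field_simp
        ring
    _ ≤ t * (-(L * (x + b / 3))) := by
        have hLx : L * x = u / 2 := by rw [hx]; field_simp
        gcongr
        linarith
    _ = -L := by linear_combination (-L) * ht_inv

end RealInequalities

section Tails

variable {Ω : Type*} {mΩ : MeasurableSpace Ω} {P : Measure Ω}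

lemma measureReal_lt_le_of_forall_gt [IsFiniteMeasure P] {Y : Ω → ℝ} {a c : ℝ}
    (h : ∀ s > a, P.real {ω | s ≤ Y ω} ≤ c) : P.real {ω | a < Y ω} ≤ c := by
  obtain ⟨u, hu_anti, hu_gt, hu_lim⟩ := exists_seq_strictAnti_tendsto a
  have hmono : Monotone fun n ↦ {ω | u n ≤ Y ω} :=
    fun _ _ hjk _ hω ↦ (hu_anti.antitone hjk).trans hω
  have hunion : {ω | a < Y ω} = ⋃ n, {ω | u n ≤ Y ω} := by
    ext ω
    simp only [Set.mem_ofPred_eq, Set.mem_iUnion]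
    refine ⟨fun hω ↦ ?_, fun ⟨n, hn⟩ ↦ (hu_gt n).trans_le hn⟩
    exact ((hu_lim.eventually_lt_const hω).exists).imp fun _ hn ↦ hn.le
  rw [hunion]
  refine le_of_tendsto
    ((ENNReal.tendsto_toReal (measure_ne_top P _)).comp (tendsto_measure_iUnion_atTop hmono)) ?_
  exact Filter.Eventually.of_forall fun n ↦ h (u n) (hu_gt n)

end Tails

section Bernstein

variable {Ω : Type*} {mΩ : MeasurableSpace Ω} {P : Measure Ω} [IsProbabilityMeasure P]

lemma mgf_le_exp_of_integral_eq_zero {X : Ω → ℝ} {b t : ℝ} (hX : MemLp X 2 P)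
    (hmean : P[X] = 0) (hXb : ∀ᵐ ω ∂P, X ω ≤ b) (hb : 0 ≤ b) (ht : 0 ≤ t) (htb : t * b < 3) :
    mgf X P t ≤ Real.exp (t ^ 2 * Var[X; P] / (2 * (1 - t * b / 3))) := by
  set k := 2 * (1 - t * b / 3)
  have hint : Integrable X P := hX.integrable one_le_two
  have hlin : Integrable (fun ω ↦ 1 + t * X ω) P := (integrable_const 1).add (hint.const_mul t)
  have hsq : Integrable (fun ω ↦ t ^ 2 / k * X ω ^ 2) P := hX.integrable_sq.const_mul _
  calc mgf X P t ≤ ∫ ω, (1 + t * X ω + t ^ 2 / k * X ω ^ 2) ∂P := by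
        refine integral_mono_ae (integrable_exp_mul_of_le t b ht hint.aemeasurable hXb)
          (hlin.add hsq) ?_
        filter_upwards [hXb] with ω hω
        have hexp := exp_le_one_add_add_sq_div_of_le (mul_nonneg ht hb) htb
          (mul_le_mul_of_nonneg_left hω ht)
        rwa [mul_pow, mul_div_right_comm] at hexp
    _ = t ^ 2 * Var[X; P] / k + 1 := by
        rw [integral_add hlin hsq, integral_add (integrable_const 1) (hint.const_mul t),
          integral_const_mul, integral_const_mul, hmean,
          variance_of_integral_eq_zero hint.aemeasurable hmean]
        simp only [integral_const, probReal_univ, smul_eq_mul]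
        ring
    _ ≤ Real.exp (t ^ 2 * Var[X; P] / k) := Real.add_one_le_exp _

lemma measureReal_sqrt_add_lt_sum_le {ι : Type*} [Fintype ι] {X : ι → Ω → ℝ} {b L : ℝ}
    (hX : ∀ i, MemLp (X i) 2 P) (hindep : iIndepFun X P) (hmean : ∀ i, P[X i] = 0)
    (hXb : ∀ i, ∀ᵐ ω ∂P, X i ω ≤ b) (hb : 0 ≤ b) (hL : 0 < L) :
    P.real {ω | √(2 * (∑ i, Var[X i; P]) * L) + b * L / 3 < ∑ i, X i ω} ≤ Real.exp (-L) := by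
  set v := ∑ i, Var[X i; P]
  have hX_meas (i : ι) : AEMeasurable (X i) P := (hX i).aestronglyMeasurable.aemeasurable
  refine measureReal_lt_le_of_forall_gt fun s hs ↦ ?_
  obtain ⟨t, ht, htb, hexponent⟩ :=
    exists_bernstein_exponent_le_neg hb hL (lt_sub_iff_add_lt.2 hs)
  rw [sub_add_cancel] at hexponent
  have hmgf : mgf (∑ i, X i) P t ≤ Real.exp (t ^ 2 * v / (2 * (1 - t * b / 3))) := by
    rw [hindep.mgf_sum₀ hX_meas, Finset.mul_sum, Finset.sum_div, Real.exp_sum]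
    exact Finset.prod_le_prod (fun _ _ ↦ mgf_nonneg) fun i _ ↦
      mgf_le_exp_of_integral_eq_zero (hX i) (hmean i) (hXb i) hb ht htb
  have hint : Integrable (fun ω ↦ Real.exp (t * (∑ i, X i) ω)) P := by
    refine integrable_exp_mul_of_le t (∑ _i : ι, b) ht
      (Finset.aemeasurable_sum _ fun i _ ↦ hX_meas i) ?_
    filter_upwards [ae_all_iff.2 hXb] with ω hω
    simpa only [Finset.sum_apply] using Finset.sum_le_sum fun i _ ↦ hω i
  calc P.real {ω | s ≤ ∑ i, X i ω} = P.real {ω | s ≤ (∑ i, X i) ω} := by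
        simp only [Finset.sum_apply]
    _ ≤ Real.exp (-t * s) * mgf (∑ i, X i) P t := measure_ge_le_exp_mul_mgf s ht hint
    _ ≤ Real.exp (-t * s) * Real.exp (t ^ 2 * v / (2 * (1 - t * b / 3))) := by gcongr
    _ ≤ Real.exp (-L) := by rwa [← Real.exp_add, Real.exp_le_exp]

end Bernstein

section UStatistic

variable {ι α : Type*} [Fintype ι]

/-- The U-statistic of order two with kernel `h` of the sample `z`: the average of
`h (z i) (z j)` over the ordered pairs of distinct indices. -/
noncomputable def uStatistic (h : α → α → ℝ) (z : ι → α) : ℝ :=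
  (∑ p ∈ univ.offDiag, h (z p.1) (z p.2)) / (Fintype.card ι * (Fintype.card ι - 1))

lemma uStatistic_nonneg {h : α → α → ℝ} {z : ι → α} (hz : ∀ i j, i ≠ j → 0 ≤ h (z i) (z j)) :
    0 ≤ uStatistic h z := by
  refine div_nonneg (sum_nonneg fun p hp ↦ hz _ _ (mem_offDiag.1 hp).2.2) ?_
  rcases Nat.eq_zero_or_pos (Fintype.card ι) with hcard | hcard
  · simp [hcard]
  · exact mul_nonneg (Nat.cast_nonneg _) (sub_nonneg.2 (Nat.one_le_cast.2 hcard))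

lemma aemeasurable_uStatistic [MeasurableSpace α] {Ω : Type*} [MeasurableSpace Ω]
    {P : Measure Ω} {Z : ι → Ω → α} {h : α → α → ℝ} (hZ : ∀ i, AEMeasurable (Z i) P)
    (hh : Measurable (Function.uncurry h)) :
    AEMeasurable (fun ω ↦ uStatistic h (Z · ω)) P :=
  (aemeasurable_fun_sum _ fun _ _ ↦
    hh.comp_aemeasurable ((hZ _).prodMk (hZ _))).div_const _

lemma sum_perm_apply_apply_eq (f : ι → ι → ℝ) {i j k l : ι} (hij : i ≠ j) (hkl : k ≠ l) :
    ∑ σ : Equiv.Perm ι, f (σ k) (σ l) = ∑ σ : Equiv.Perm ι, f (σ i) (σ j) := by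
  obtain ⟨τ, hτk, hτl⟩ := MulAction.is_two_pretransitive_iff.1
    (Equiv.Perm.isMultiplyPretransitive ι 2) hij hkl
  simp only [Equiv.Perm.smul_def] at hτk hτl
  refine Fintype.sum_equiv (Equiv.mulRight τ) _ _ fun σ ↦ ?_
  simp only [Equiv.coe_mulRight, Equiv.Perm.mul_apply, hτk, hτl]

lemma sum_offDiag_perm (f : ι → ι → ℝ) (σ : Equiv.Perm ι) :
    ∑ p ∈ univ.offDiag, f (σ p.1) (σ p.2) = ∑ p ∈ univ.offDiag, f p.1 p.2 :=
  sum_equiv (σ.prodCongr σ) (by simp) (by simp)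

lemma sum_perm_eq_factorial_mul_uStatistic (h : α → α → ℝ) (z : ι → α) {i j : ι} (hij : i ≠ j) :
    ∑ σ : Equiv.Perm ι, h (z (σ i)) (z (σ j)) =
      (Fintype.card ι).factorial * uStatistic h z := by
  have hcard : ((univ : Finset ι).offDiag.card : ℝ) = Fintype.card ι * (Fintype.card ι - 1) := by
    rw [offDiag_card, card_univ, Nat.cast_sub (Nat.le_mul_self _), Nat.cast_mul]
    ring
  have hcard_ne : (Fintype.card ι * (Fintype.card ι - 1) : ℝ) ≠ 0 := by
    rw [← hcard, Nat.cast_ne_zero, card_ne_zero]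
    exact ⟨(i, j), by simpa using hij⟩
  rw [uStatistic, mul_div_assoc', eq_div_iff hcard_ne]
  calc (∑ σ : Equiv.Perm ι, h (z (σ i)) (z (σ j))) * (Fintype.card ι * (Fintype.card ι - 1))
      = ∑ p ∈ univ.offDiag, ∑ σ : Equiv.Perm ι, h (z (σ p.1)) (z (σ p.2)) := by
        rw [sum_congr rfl fun p hp ↦ sum_perm_apply_apply_eq (fun i j ↦ h (z i) (z j)) hij
          (mem_offDiag.1 hp).2.2, sum_const, nsmul_eq_mul, hcard, mul_comm]
    _ = ∑ _σ : Equiv.Perm ι, ∑ p ∈ univ.offDiag, h (z p.1) (z p.2) := by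
        rw [sum_comm]
        exact sum_congr rfl fun σ _ ↦ sum_offDiag_perm (fun i j ↦ h (z i) (z j)) σ
    _ = (Fintype.card ι).factorial * ∑ p ∈ univ.offDiag, h (z p.1) (z p.2) := by
        rw [sum_const, card_univ, Fintype.card_perm, nsmul_eq_mul]

lemma card_mul_uStatistic_eq_sum_perm {κ : Type*} [Fintype κ] (h : α → α → ℝ) (z : ι → α)
    (e : κ × Bool ↪ ι) :
    Fintype.card κ * uStatistic h z = ∑ σ : Equiv.Perm ι, ((Fintype.card ι).factorial : ℝ)⁻¹ *
      ∑ k, h (z (σ (e (k, false)))) (z (σ (e (k, true)))) := by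
  have hne (k : κ) : e (k, false) ≠ e (k, true) := e.injective.ne (by simp)
  rw [← mul_sum, sum_comm]
  simp only [sum_perm_eq_factorial_mul_uStatistic h z (hne _), sum_const, card_univ, nsmul_eq_mul]
  field_simp

end UStatistic

section Independence

variable {Ω κ : Type*} {mΩ : MeasurableSpace Ω} {P : Measure Ω}

lemma iIndepFun_curry {τ 𝓧 : Type*} [Countable κ] [Countable τ] [MeasurableSpace 𝓧]
    {X : κ × τ → Ω → 𝓧} (hX : ∀ p, AEMeasurable (X p) P) (hindep : iIndepFun X P) :
    iIndepFun (fun k ω t ↦ X (k, t) ω) P := by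
  have := hindep.isProbabilityMeasure
  have (k : κ) (t : τ) : IsProbabilityMeasure (P.map (X (k, t))) :=
    Measure.isProbabilityMeasure_map (hX (k, t))
  rw [iIndepFun_iff_map_fun_eq_infinitePi_map₀' fun k ↦ aemeasurable_pi_lambda _ fun t ↦ hX (k, t)]
  calc P.map (fun ω k t ↦ X (k, t) ω)
      = (P.map fun ω p ↦ X p ω).map (MeasurableEquiv.curry κ τ 𝓧) := by
        rw [AEMeasurable.map_map_of_aemeasurable (MeasurableEquiv.measurable _).aemeasurable
          (aemeasurable_pi_lambda _ hX)]
        rfl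
    _ = Measure.infinitePi fun k ↦ Measure.infinitePi fun t ↦ P.map (X (k, t)) := by
        rw [hindep.map_fun_eq_infinitePi_map₀' hX]
        exact Measure.infinitePi_map_curry fun k t ↦ P.map (X (k, t))
    _ = Measure.infinitePi fun k ↦ P.map fun ω t ↦ X (k, t) ω := by
        congr! with k
        exact ((hindep.precomp (Prod.mk_right_injective k)).map_fun_eq_infinitePi_map₀'
          fun t ↦ hX (k, t)).symm

lemma integrable_exp_mul_sum_of_iIndepFun [IsFiniteMeasure P] {X : κ → Ω → ℝ} {t : ℝ}
    (hindep : iIndepFun X P) (hX : ∀ k, AEMeasurable (X k) P) {s : Finset κ}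
    (hint : ∀ k ∈ s, Integrable (fun ω ↦ Real.exp (t * X k ω)) P) :
    Integrable (fun ω ↦ Real.exp (t * ∑ k ∈ s, X k ω)) P := by
  let Y (k : κ) : Ω → ℝ := (hX k).mk
  have hXY (k : κ) : X k =ᵐ[P] Y k := (hX k).ae_eq_mk
  have hY := (hindep.congr hXY).integrable_exp_mul_sum (fun k ↦ (hX k).measurable_mk) (t := t)
    fun k hk ↦ (hint k hk).congr ((hXY k).mono fun ω hω ↦ by simp only [hω])
  refine hY.congr ?_
  filter_upwards [(ae_ball_iff s.countable_toSet).2 fun k _ ↦ hXY k] with ω hω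
  rw [Finset.sum_apply, sum_congr rfl fun k hk ↦ (hω k hk)]

end Independence

section UStatisticMgf

variable {ι κ α Ω : Type*} [MeasurableSpace α] {mΩ : MeasurableSpace Ω}
  {P : Measure Ω} {Z : ι → Ω → α} {h : α → α → ℝ} {t C : ℝ}

lemma iIndepFun_kernel_pairs [Countable κ] (hZ : ∀ i, AEMeasurable (Z i) P) (hindep : iIndepFun Z P)
    (hh : Measurable (Function.uncurry h)) (e : κ × Bool ↪ ι) :
    iIndepFun (fun k ω ↦ h (Z (e (k, false)) ω) (Z (e (k, true)) ω)) P :=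
  (iIndepFun_curry (fun p ↦ hZ (e p)) (hindep.precomp e.injective)).comp
    (fun _ z ↦ h (z false) (z true))
    fun _ ↦ by fun_prop

variable [Fintype κ]

lemma integral_exp_mul_sum_pairs_le [IsFiniteMeasure P] (hZ : ∀ i, AEMeasurable (Z i) P)
    (hindep : iIndepFun Z P) (hh : Measurable (Function.uncurry h))
    (hmgf : ∀ i j, i ≠ j → mgf (fun ω ↦ h (Z i ω) (Z j ω)) P t ≤ C) (e : κ × Bool ↪ ι) :
    ∫ ω, Real.exp (t * ∑ k, h (Z (e (k, false)) ω) (Z (e (k, true)) ω)) ∂P ≤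
      C ^ Fintype.card κ := by
  have hmeas (k : κ) : AEMeasurable (fun ω ↦ h (Z (e (k, false)) ω) (Z (e (k, true)) ω)) P :=
    hh.comp_aemeasurable ((hZ _).prodMk (hZ _))
  have hsum := (iIndepFun_kernel_pairs hZ hindep hh e).mgf_sum₀ (t := t) hmeas univ
  simp only [mgf, Finset.sum_apply] at hsum
  rw [hsum, ← card_univ, ← prod_const]
  exact prod_le_prod (fun _ _ ↦ mgf_nonneg) fun k _ ↦ hmgf _ _ (e.injective.ne (by simp))

lemma mgf_card_mul_uStatistic_le [Fintype ι] [IsFiniteMeasure P] (hZ : ∀ i, AEMeasurable (Z i) P)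
    (hindep : iIndepFun Z P) (hh : Measurable (Function.uncurry h))
    (hint : ∀ i j, i ≠ j → Integrable (fun ω ↦ Real.exp (t * h (Z i ω) (Z j ω))) P)
    (hmgf : ∀ i j, i ≠ j → mgf (fun ω ↦ h (Z i ω) (Z j ω)) P t ≤ C) (e : κ × Bool ↪ ι) :
    mgf (fun ω ↦ Fintype.card κ * uStatistic h (Z · ω)) P t ≤ C ^ Fintype.card κ := by
  set w : ℝ := ((Fintype.card ι).factorial : ℝ)⁻¹ with hw
  have hw_nonneg : 0 ≤ w := by positivity
  have hw_sum : ∑ _σ : Equiv.Perm ι, w = 1 := by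
    rw [sum_const, card_univ, Fintype.card_perm, nsmul_eq_mul, hw,
      mul_inv_cancel₀ (by positivity)]
  let S (σ : Equiv.Perm ι) (ω : Ω) : ℝ :=
    ∑ k, h (Z (σ (e (k, false))) ω) (Z (σ (e (k, true))) ω)
  have hS_int (σ : Equiv.Perm ι) : Integrable (fun ω ↦ Real.exp (t * S σ ω)) P := by
    refine integrable_exp_mul_sum_of_iIndepFun
      (iIndepFun_kernel_pairs hZ hindep hh (e.trans σ.toEmbedding))
      (fun k ↦ hh.comp_aemeasurable ((hZ _).prodMk (hZ _)))
      fun k _ ↦ hint _ _ ((e.trans σ.toEmbedding).injective.ne (by simp))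
  have hjensen (ω : Ω) : Real.exp (t * (Fintype.card κ * uStatistic h (Z · ω))) ≤
      ∑ σ, w * Real.exp (t * S σ ω) := by
    rw [card_mul_uStatistic_eq_sum_perm h _ e, mul_sum]
    simp only [mul_left_comm t]
    exact convexOn_exp.map_sum_le (fun _ _ ↦ hw_nonneg) hw_sum fun _ _ ↦ Set.mem_univ _
  calc mgf (fun ω ↦ Fintype.card κ * uStatistic h (Z · ω)) P t
      ≤ ∫ ω, ∑ σ, w * Real.exp (t * S σ ω) ∂P :=
        integral_mono_of_nonneg (ae_of_all _ fun _ ↦ (Real.exp_pos _).le)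
          (integrable_finsetSum _ fun σ _ ↦ (hS_int σ).const_mul w) (ae_of_all _ hjensen)
    _ = ∑ σ, w * ∫ ω, Real.exp (t * S σ ω) ∂P := by
        rw [integral_finsetSum _ fun σ _ ↦ (hS_int σ).const_mul w]
        simp only [integral_const_mul]
    _ ≤ ∑ _σ : Equiv.Perm ι, w * C ^ Fintype.card κ := by
        gcongr with σ
        exact integral_exp_mul_sum_pairs_le hZ hindep hh hmgf (e.trans σ.toEmbedding)
    _ = C ^ Fintype.card κ := by rw [← sum_mul, hw_sum, one_mul]

end UStatisticMgf

section UStatisticTail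

variable {Ω : Type*} {mΩ : MeasurableSpace Ω} {P : Measure Ω} [IsProbabilityMeasure P]

lemma mgf_le_exp_of_mem_Icc_zero {W : Ω → ℝ} {c t : ℝ} (hW : AEMeasurable W P)
    (hWc : ∀ᵐ ω ∂P, W ω ∈ Set.Icc 0 c) (ht : t ≤ 0) :
    mgf W P t ≤ Real.exp (t * P[W] + t ^ 2 * c / 2 * P[W]) := by
  have hint : Integrable W P := Integrable.of_mem_Icc 0 c hW hWc
  have hlin : Integrable (fun ω ↦ 1 + (t + t ^ 2 * c / 2) * W ω) P :=
    (integrable_const 1).add (hint.const_mul _)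
  calc mgf W P t ≤ ∫ ω, (1 + (t + t ^ 2 * c / 2) * W ω) ∂P := by
        refine integral_mono_ae (integrable_exp_mul_of_mem_Icc hW hWc) hlin ?_
        filter_upwards [hWc] with ω hω
        have hexp := exp_le_one_add_add_sq_div_two_of_nonpos
          (mul_nonpos_of_nonpos_of_nonneg ht hω.1)
        have hsq : t ^ 2 * (W ω * W ω) ≤ t ^ 2 * (c * W ω) := by gcongr; exacts [hω.1, hω.2]
        linarith
    _ = (t * P[W] + t ^ 2 * c / 2 * P[W]) + 1 := by
        rw [integral_add (integrable_const 1) (hint.const_mul _), integral_const_mul]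
        simp only [integral_const, probReal_univ, smul_eq_mul]
        ring
    _ ≤ Real.exp (t * P[W] + t ^ 2 * c / 2 * P[W]) := Real.add_one_le_exp _

variable {ι κ α : Type*} [Fintype ι] [Fintype κ] [MeasurableSpace α]
  {Z : ι → Ω → α} {h : α → α → ℝ}

lemma integrable_exp_mul_uStatistic (hZ : ∀ i, AEMeasurable (Z i) P)
    (hh : Measurable (Function.uncurry h))
    (hpos : ∀ i j, i ≠ j → ∀ᵐ ω ∂P, 0 ≤ h (Z i ω) (Z j ω)) {t : ℝ} (ht : t ≤ 0) :
    Integrable (fun ω ↦ Real.exp (t * uStatistic h (Z · ω))) P := by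
  have hle : ∀ᵐ ω ∂P, -uStatistic h (Z · ω) ≤ 0 := by
    filter_upwards [ae_all_iff.2 fun i ↦ ae_all_iff.2 fun j ↦
      Filter.eventually_imp_distrib_left.2 (hpos i j)] with ω hω
    exact neg_nonpos.2 (uStatistic_nonneg hω)
  simpa only [Pi.neg_apply, neg_mul_neg] using
    integrable_exp_mul_of_le (-t) 0 (neg_nonneg.2 ht) (aemeasurable_uStatistic hZ hh).neg hle

lemma measureReal_sqrt_lt_sub_uStatistic_le [Nonempty κ] {c θ L : ℝ}
    (hZ : ∀ i, AEMeasurable (Z i) P) (hindep : iIndepFun Z P)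
    (hh : Measurable (Function.uncurry h))
    (hhc : ∀ i j, i ≠ j → ∀ᵐ ω ∂P, h (Z i ω) (Z j ω) ∈ Set.Icc 0 c)
    (hθ : ∀ i j, i ≠ j → ∫ ω, h (Z i ω) (Z j ω) ∂P = θ) (e : κ × Bool ↪ ι) (hL : 0 ≤ L) :
    P.real {ω | √(2 * (c * θ) * (L / Fintype.card κ)) < θ - uStatistic h (Z · ω)} ≤
      Real.exp (-L) := by
  set m : ℝ := (Fintype.card κ : ℝ) with hm_def
  have hm : 0 < m := by positivity
  refine measureReal_lt_le_of_forall_gt fun s hs ↦ ?_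
  obtain ⟨t, ht, hexponent⟩ := exists_gaussian_exponent_le_neg (by positivity) hs
  have hpair (i j : ι) : AEMeasurable (fun ω ↦ h (Z i ω) (Z j ω)) P :=
    hh.comp_aemeasurable ((hZ i).prodMk (hZ j))
  have hmgf := mgf_card_mul_uStatistic_le hZ hindep hh
    (fun i j hij ↦ integrable_exp_mul_of_mem_Icc (hpair i j) (hhc i j hij))
    (fun i j hij ↦ hθ i j hij ▸ mgf_le_exp_of_mem_Icc_zero (hpair i j) (hhc i j hij) ht) e
  have hint : Integrable (fun ω ↦ Real.exp (t * (m * uStatistic h (Z · ω)))) P := by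
    simpa only [mul_assoc] using integrable_exp_mul_uStatistic hZ hh
      (fun i j hij ↦ (hhc i j hij).mono fun _ hω ↦ hω.1) (mul_nonpos_of_nonpos_of_nonneg ht hm.le)
  calc P.real {ω | s ≤ θ - uStatistic h (Z · ω)}
      = P.real {ω | m * uStatistic h (Z · ω) ≤ m * (θ - s)} := by
        simp only [mul_le_mul_iff_right₀ hm, le_sub_comm]
    _ ≤ Real.exp (-t * (m * (θ - s))) * mgf (fun ω ↦ m * uStatistic h (Z · ω)) P t :=
        measure_le_le_exp_mul_mgf _ ht hint
    _ ≤ Real.exp (-t * (m * (θ - s))) * Real.exp (t * θ + t ^ 2 * c / 2 * θ) ^ Fintype.card κ := by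
        gcongr
    _ = Real.exp (m * (t * s + t ^ 2 * (c * θ) / 2)) := by
        rw [← Real.exp_nat_mul, ← Real.exp_add, ← hm_def]
        ring_nf
    _ ≤ Real.exp (m * (-(L / m))) := by gcongr
    _ = Real.exp (-L) := by rw [mul_neg, mul_div_cancel₀ _ hm.ne']

end UStatisticTail

section SampleVariance

variable {ι : Type*} [Fintype ι]

/-- The unbiased sample variance `Vₙ` of the sample `z`, as the U-statistic with kernel
`(x - y) ^ 2 / 2`; this agrees with the usual normalization by `n - 1` of the sum of squared
deviations from the sample mean. -/
noncomputable def sampleVariance (z : ι → ℝ) : ℝ :=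
  uStatistic (fun x y ↦ (x - y) ^ 2 / 2) z

lemma sampleVariance_eq_sum_lt [LinearOrder ι] (z : ι → ℝ) :
    sampleVariance z = 1 / (Fintype.card ι * (Fintype.card ι - 1)) *
      ∑ i, ∑ j, if i < j then (z i - z j) ^ 2 else 0 := by
  have hsplit (i j : ι) : (z i - z j) ^ 2 / 2 = (if i < j then (z i - z j) ^ 2 / 2 else 0) +
      (if j < i then (z j - z i) ^ 2 / 2 else 0) := by
    rcases lt_trichotomy i j with hij | rfl | hij
    · simp [hij, hij.not_gt]
    · simp
    · simp [hij, hij.not_gt, sub_sq_comm]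
  have hsum : ∑ p ∈ univ.offDiag, (z p.1 - z p.2) ^ 2 / 2 =
      ∑ i, ∑ j, if i < j then (z i - z j) ^ 2 else 0 := by
    calc ∑ p ∈ univ.offDiag, (z p.1 - z p.2) ^ 2 / 2 = ∑ p : ι × ι, (z p.1 - z p.2) ^ 2 / 2 := by
          refine sum_subset (subset_univ _) fun p _ hp ↦ ?_
          have hp_eq : p.1 = p.2 := by simpa using hp
          simp [hp_eq]
      _ = ∑ i, ∑ j, ((if i < j then (z i - z j) ^ 2 / 2 else 0) +
            (if j < i then (z j - z i) ^ 2 / 2 else 0)) := by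
          rw [Fintype.sum_prod_type]
          exact sum_congr rfl fun i _ ↦ sum_congr rfl fun j _ ↦ hsplit i j
      _ = ∑ i, ∑ j, if i < j then (z i - z j) ^ 2 else 0 := by
          simp only [sum_add_distrib]
          rw [sum_comm (f := fun i j ↦ if j < i then (z j - z i) ^ 2 / 2 else 0)]
          simp only [← sum_add_distrib, ite_add_ite, add_halves, add_zero]
  rw [sampleVariance, uStatistic, hsum, one_div_mul_eq_div]

variable {Ω : Type*} {mΩ : MeasurableSpace Ω} {P : Measure Ω}

lemma ae_sub_sq_div_two_mem_Icc {X Y : Ω → ℝ} {a b : ℝ} (hX : ∀ᵐ ω ∂P, X ω ∈ Set.Icc a b)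
    (hY : ∀ᵐ ω ∂P, Y ω ∈ Set.Icc a b) :
    ∀ᵐ ω ∂P, (X ω - Y ω) ^ 2 / 2 ∈ Set.Icc 0 ((b - a) ^ 2 / 2) := by
  filter_upwards [hX, hY] with ω hXω hYω
  have hsq : (X ω - Y ω) ^ 2 ≤ (b - a) ^ 2 :=
    sq_le_sq' (by linarith [hXω.1, hYω.2]) (by linarith [hXω.2, hYω.1])
  exact ⟨by positivity, by linarith⟩

variable [IsProbabilityMeasure P]

lemma integral_sub_sq_eq_variance_add {X Y : Ω → ℝ} (hX : MemLp X 2 P) (hY : MemLp Y 2 P)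
    (hXY : X ⟂ᵢ[P] Y) (hmean : P[X] = P[Y]) :
    ∫ ω, (X ω - Y ω) ^ 2 ∂P = Var[X; P] + Var[Y; P] := by
  have hmean_sub : P[X - Y] = 0 := by
    simp only [Pi.sub_apply]
    rw [integral_sub (hX.integrable one_le_two) (hY.integrable one_le_two), hmean, sub_self]
  calc ∫ ω, (X ω - Y ω) ^ 2 ∂P = Var[X - Y; P] :=
        (variance_of_integral_eq_zero (hX.sub hY).aestronglyMeasurable.aemeasurable hmean_sub).symm
    _ = Var[X; P] + Var[Y; P] := by
        rw [variance_sub hX hY, hXY.covariance_eq_zero hX hY]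
        ring

lemma measureReal_mul_sqrt_lt_sub_sampleVariance_le {Z : ι → Ω → ℝ} {a b m v L : ℝ}
    (hcard : 2 ≤ Fintype.card ι) (hZ : ∀ i, AEMeasurable (Z i) P) (hindep : iIndepFun Z P)
    (hrange : ∀ i, ∀ᵐ ω ∂P, Z i ω ∈ Set.Icc a b) (hmean : ∀ i, P[Z i] = m)
    (hvar : ∀ i, Var[Z i; P] = v) (hL : 0 ≤ L) :
    P.real {ω | (b - a) * √(2 * v * L / (Fintype.card ι - 1)) < v - sampleVariance (Z · ω)} ≤
      Real.exp (-L) := by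
  have hL2 (i : ι) : MemLp (Z i) 2 P := memLp_of_bounded (hrange i) (hZ i).aestronglyMeasurable 2
  have hker_mean (i j : ι) (hij : i ≠ j) : ∫ ω, (Z i ω - Z j ω) ^ 2 / 2 ∂P = v := by
    rw [integral_div, integral_sub_sq_eq_variance_add (hL2 i) (hL2 j) (hindep.indepFun hij)
      ((hmean i).trans (hmean j).symm), hvar, hvar, add_self_div_two]
  obtain ⟨e⟩ : Nonempty (Fin (Fintype.card ι / 2) × Bool ↪ ι) := by
    refine Function.Embedding.nonempty_of_card_le ?_
    simpa using Nat.div_mul_le_self (Fintype.card ι) 2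
  have : Nonempty (Fin (Fintype.card ι / 2)) := Fin.pos_iff_nonempty.1 (by omega)
  have htail := measureReal_sqrt_lt_sub_uStatistic_le hZ hindep
    (h := fun x y ↦ (x - y) ^ 2 / 2) (by fun_prop)
    (fun i j _ ↦ ae_sub_sq_div_two_mem_Icc (hrange i) (hrange j)) hker_mean e hL
  obtain ⟨i⟩ : Nonempty ι := Fintype.card_pos_iff.1 (by omega)
  obtain ⟨ω, hω⟩ := (hrange i).exists
  have hab : 0 ≤ b - a := sub_nonneg.2 (hω.1.trans hω.2)
  have hv : 0 ≤ v := hvar i ▸ variance_nonneg _ _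
  have hcard_pos : (0 : ℝ) < Fintype.card ι - 1 := sub_pos.2 (Nat.one_lt_cast.2 hcard)
  have hcard_le : (Fintype.card ι - 1 : ℝ) ≤ 2 * Fintype.card (Fin (Fintype.card ι / 2)) := by
    rw [Fintype.card_fin, sub_le_iff_le_add]
    exact_mod_cast (by omega : Fintype.card ι ≤ 2 * (Fintype.card ι / 2) + 1)
  have hthreshold := sqrt_sq_half_mul_le_mul_sqrt hab hv hL hcard_pos hcard_le
  exact (measureReal_mono fun _ ↦ hthreshold.trans_lt).trans htail

end SampleVariance

section EmpiricalBernstein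

variable {ι Ω : Type*} [Fintype ι] {mΩ : MeasurableSpace Ω} {P : Measure Ω}
  [IsProbabilityMeasure P] {Z : ι → Ω → ℝ} {a b m v : ℝ}

lemma measureReal_sqrt_add_lt_sub_mean_le [Nonempty ι] {L : ℝ} (hZ : ∀ i, AEMeasurable (Z i) P)
    (hindep : iIndepFun Z P) (hrange : ∀ i, ∀ᵐ ω ∂P, Z i ω ∈ Set.Icc a b)
    (hmean : ∀ i, P[Z i] = m) (hvar : ∀ i, Var[Z i; P] = v) (hL : 0 < L) :
    P.real {ω | √(2 * v * L / Fintype.card ι) + (b - a) * L / (3 * Fintype.card ι) <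
      m - (∑ i, Z i ω) / Fintype.card ι} ≤ Real.exp (-L) := by
  set n : ℝ := (Fintype.card ι : ℝ) with hn_def
  have hn : 0 < n := by positivity
  have hL2 (i : ι) : MemLp (Z i) 2 P := memLp_of_bounded (hrange i) (hZ i).aestronglyMeasurable 2
  have hint (i : ι) : Integrable (Z i) P := (hL2 i).integrable one_le_two
  have hm : m ∈ Set.Icc a b := by
    obtain ⟨i⟩ := ‹Nonempty ι›
    exact hmean i ▸ (convex_Icc a b).integral_mem isClosed_Icc (hrange i) (hint i)
  have hbernstein := measureReal_sqrt_add_lt_sum_le (X := fun i ω ↦ m - Z i ω) (b := b - a)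
    (fun i ↦ (memLp_const m).sub (hL2 i))
    (hindep.comp (fun _ x ↦ m - x) fun _ ↦ measurable_const.sub measurable_id)
    (fun i ↦ by rw [integral_sub (integrable_const m) (hint i), hmean]; simp)
    (fun i ↦ (hrange i).mono fun ω hω ↦ sub_le_sub hm.2 hω.1)
    (sub_nonneg.2 (hm.1.trans hm.2)) hL
  simp only [variance_const_sub (hZ _).aestronglyMeasurable, hvar, sum_sub_distrib, sum_const,
    card_univ, nsmul_eq_mul, ← hn_def] at hbernstein
  have hsqrt : √(2 * (n * v) * L) = n * √(2 * v * L / n) := by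
    rw [← Real.sqrt_sq hn.le, ← Real.sqrt_mul (sq_nonneg n), Real.sqrt_sq hn.le]
    congr 1
    field_simp
  refine (measureReal_mono fun ω hω ↦ ?_).trans hbernstein
  calc √(2 * (n * v) * L) + (b - a) * L / 3
      = n * (√(2 * v * L / n) + (b - a) * L / (3 * n)) := by rw [hsqrt]; field_simp
    _ < n * (m - (∑ i, Z i ω) / n) := mul_lt_mul_of_pos_left hω hn
    _ = n * m - ∑ i, Z i ω := by field_simp

lemma ofReal_one_sub_le_measure_of_compl_subset {A B G : Set Ω} {γ : ℝ} (hA : P.real A ≤ γ / 2)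
    (hB : P.real B ≤ γ / 2) (hG : Aᶜ ∩ Bᶜ ⊆ G) : ENNReal.ofReal (1 - γ) ≤ P G := by
  refine ENNReal.ofReal_le_of_le_toReal ?_
  have hcover : Set.univ ⊆ G ∪ (A ∪ B) := by
    rw [Set.univ_subset_iff, Set.union_comm, ← Set.compl_subset_iff_union, Set.compl_union]
    exact hG
  have hone : 1 ≤ P.real G + P.real (A ∪ B) :=
    probReal_univ.symm.trans_le ((measureReal_mono hcover).trans (measureReal_union_le _ _))
  change 1 - γ ≤ P.real G
  linarith [measureReal_union_le (μ := P) A B]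

end EmpiricalBernstein

theorem empirical_bernstein_general {ι Ω : Type*} [Fintype ι] [MeasurableSpace Ω]
    (P : Measure Ω) [IsProbabilityMeasure P] (hcard : 2 ≤ Fintype.card ι) {Z : ι → Ω → ℝ}
    (hZ : ∀ i, AEMeasurable (Z i) P) (hindep : iIndepFun Z P) {a b : ℝ}
    (hrange : ∀ i, ∀ᵐ ω ∂P, Z i ω ∈ Set.Icc a b) {m v : ℝ} (hmean : ∀ i, P[Z i] = m)
    (hvar : ∀ i, Var[Z i; P] = v) {γ : ℝ} (hγ : γ ∈ Set.Ioo 0 1) :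
    ENNReal.ofReal (1 - γ) ≤
      P {ω | m ≤ (∑ i, Z i ω) / Fintype.card ι
        + √(2 * sampleVariance (Z · ω) * Real.log (2 / γ) / Fintype.card ι)
        + 7 * (b - a) * Real.log (2 / γ) / (3 * (Fintype.card ι - 1))} := by
  set L := Real.log (2 / γ) with hL_def
  have hL : 0 < L := Real.log_pos ((one_lt_div hγ.1).2 (by linarith [hγ.2]))
  have hexp : Real.exp (-L) = γ / 2 := by
    rw [hL_def, ← Real.log_inv, inv_div, Real.exp_log (half_pos hγ.1)]
  have : Nonempty ι := Fintype.card_pos_iff.1 (by omega)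
  let i := Classical.arbitrary ι
  have hv : 0 ≤ v := hvar i ▸ variance_nonneg _ _
  obtain ⟨ω₀, hω₀⟩ := (hrange i).exists
  have hab : 0 ≤ b - a := sub_nonneg.2 (hω₀.1.trans hω₀.2)
  refine ofReal_one_sub_le_measure_of_compl_subset
    (hexp ▸ measureReal_sqrt_add_lt_sub_mean_le hZ hindep hrange hmean hvar hL)
    (hexp ▸ measureReal_mul_sqrt_lt_sub_sampleVariance_le hcard hZ hindep hrange hmean hvar hL.le)
    fun ω hω ↦ ?_
  exact le_add_sqrt_add_of_bernstein hv hL.le hab (Nat.one_lt_cast.2 hcard)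
    (not_lt.1 hω.1) (not_lt.1 hω.2)

/-- Empirical Bernstein inequality: for `n ≥ 2` i.i.d. random variables `Z i` with
values in `[0,1]`, with probability at least `1 − γ` the mean `E[Z]` is bounded by the
sample mean plus `√(2 Vₙ ln(2/γ)/n) + 7 ln(2/γ)/(3(n−1))`, where `Vₙ` is the unbiased
sample variance. -/
theorem empirical_bernstein
    {Ω : Type*} [MeasurableSpace Ω] (P : Measure Ω) [IsProbabilityMeasure P]
    (n : ℕ) (hn : 2 ≤ n) (Z : Fin n → Ω → ℝ)
    (hmeas : ∀ i, Measurable (Z i))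
    (hindep : iIndepFun Z P)
    (hident : ∀ i, Measure.map (Z i) P = Measure.map (Z ⟨0, by omega⟩) P)
    (hrange : ∀ i ω, Z i ω ∈ Set.Icc (0:ℝ) 1)
    (γ : ℝ) (hγ : γ ∈ Set.Ioo (0:ℝ) 1) :
    ENNReal.ofReal (1 - γ) ≤
      P {ω | (∫ ω', Z ⟨0, by omega⟩ ω' ∂P) ≤
        (1 / (n:ℝ)) * ∑ i, Z i ω
        + Real.sqrt (2 *
            ((1 / ((n:ℝ) * ((n:ℝ) - 1))) *
              ∑ i, ∑ j, if i < j then (Z i ω - Z j ω) ^ 2 else 0)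
            * Real.log (2 / γ) / (n:ℝ))
        + 7 * Real.log (2 / γ) / (3 * ((n:ℝ) - 1))} := by
  have hident' (i : Fin n) : IdentDistrib (Z i) (Z ⟨0, by omega⟩) P P :=
    ⟨(hmeas i).aemeasurable, (hmeas _).aemeasurable, hident i⟩
  simpa only [sampleVariance_eq_sum_lt, Fintype.card_fin, one_div_mul_eq_div, sub_zero,
    mul_one] using
    empirical_bernstein_general P (by simpa using hn) (fun i ↦ (hmeas i).aemeasurable) hindep
    (fun i ↦ ae_of_all P (hrange i)) (fun i ↦ (hident' i).integral_eq)
    (fun i ↦ (hident' i).variance_eq) hγ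
end
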